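/- Let α ∈ (0,2]∖{1} and δ ∈ ℝ with |δ| ≤ min(α, 2−α). Then G_{α,δ} satisfies the Chapman–Kolmogorov (semigroup) equation: for all s, t > 0 and x ∈ ℝ, G_{α,δ}(t+s, x) = ∫_ℝ G_{α,δ}(t, y) G_{α,δ}(s, x−y) dy. -/

import Mathlib

open MeasureTheory

/-- The one-dimensional Green function
`G_{α,δ}(t,x) = (1/2π) ∫ exp(−izx − t|z|^α exp(−iδ(π/2) sgn z)) dz`. -/
noncomputable def G1 (a δ : ℝ) (t x : ℝ) : ℂ :=
  ((1 / (2 * Real.pi) : ℝ)) • ∫ z : ℝ,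
    Complex.exp (-(Complex.I * (z : ℂ) * (x : ℂ)) -
      ((t * |z| ^ a : ℝ) : ℂ) *
        Complex.exp (-(Complex.I * (δ : ℂ) * ((Real.pi / 2 : ℝ) : ℂ) *
          ((Real.sign z : ℝ) : ℂ))))

/-!
Up to scaling, the Green function at time `t` is the Fourier transform of `exp (-t ψ)`, where `ψ` is
Feller's exponent. Since `exp (-(t + s) ψ) = exp (-t ψ) exp (-s ψ)`, the semigroup equation says
that the Fourier transform turns this product into a convolution. For functions in `L¹ ∩ L²` that is
Parseval's identity: the convolution of `𝓕 f` and `𝓕 g` at `ξ` is the inner product of `𝓕 f` with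
the Fourier transform of the modulated function `z ↦ exp (2πi⟪z, ξ⟫) conj (g z)`. The exponentials
are integrable because `Re ψ(z) = cos (δπ/2) |z| ^ a` with `cos (δπ/2) > 0`, and they lie in `L²`
because `|exp (-t ψ)|² = |exp (-2t ψ)|`.
-/

open scoped ComplexConjugate Convolution ContDiff FourierTransform InnerProductSpace SchwartzMap

section FourierTransform

variable {V F : Type*} [NormedAddCommGroup V] [InnerProductSpace ℝ V] [FiniteDimensional ℝ V]
  [MeasurableSpace V] [BorelSpace V]

theorem conj_fourier (f : V → ℂ) (w : V) : conj (𝓕 f w) = 𝓕 (fun v ↦ conj (f v)) (-w) := by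
  simp only [Real.fourier_eq, ← integral_conj, Circle.smul_def, smul_eq_mul, map_mul,
    inner_neg_right, AddChar.map_neg_eq_inv, Circle.coe_inv_eq_conj]

theorem fourier_fourierChar_smul [NormedAddCommGroup F] [NormedSpace ℂ F] (f : V → F) (ξ w : V) :
    𝓕 (fun v ↦ Real.fourierChar ⟪v, ξ⟫_ℝ • f v) w = 𝓕 f (w - ξ) := by
  simp only [Real.fourier_eq, smul_smul, ← AddChar.map_add_eq_mul, inner_sub_right, neg_sub,
    neg_add_eq_sub]

theorem integral_fourier_smul_eq [NormedAddCommGroup F] [NormedSpace ℂ F] [CompleteSpace F]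
    {f : V → ℂ} {g : V → F} (hf : Integrable f) (hg : Integrable g) :
    ∫ w, 𝓕 f w • g w = ∫ w, f w • 𝓕 g w := by
  simpa using! VectorFourier.integral_fourierIntegral_smul_eq_flip (L := innerₗ V)
    Real.continuous_fourierChar continuous_inner hf hg

variable [NormedAddCommGroup F] [InnerProductSpace ℂ F] [CompleteSpace F]

theorem integral_schwartzMap_smul_fourier_toLp (φ : 𝓢(V, ℂ)) {f : V → F} (hf : Integrable f)
    (hf₂ : MemLp f 2) :
    ∫ x, φ x • (𝓕 (hf₂.toLp f) : Lp F 2 (volume : Measure V)) x = ∫ x, φ x • 𝓕 f x :=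
  calc
    ∫ x, φ x • (𝓕 (hf₂.toLp f) : Lp F 2 (volume : Measure V)) x
        = (𝓕 (Lp.toTemperedDistribution (hf₂.toLp f))) φ := by
      rw [Lp.fourier_toTemperedDistribution_eq, Lp.toTemperedDistribution_apply]
    _ = ∫ x, 𝓕 φ x • hf₂.toLp f x := by
      rw [TemperedDistribution.fourier_apply, Lp.toTemperedDistribution_apply]
    _ = ∫ x, 𝓕 (φ : V → ℂ) x • f x := by
      refine integral_congr_ae ?_
      filter_upwards [hf₂.coeFn_toLp] with x hx
      rw [hx, SchwartzMap.fourier_coe]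
    _ = ∫ x, φ x • 𝓕 f x := integral_fourier_smul_eq φ.integrable hf

theorem coeFn_fourier_toLp {f : V → F} (hf : Integrable f) (hf₂ : MemLp f 2) :
    (𝓕 (hf₂.toLp f) : Lp F 2 (volume : Measure V)) =ᵐ[volume] 𝓕 f := by
  have continuous_fourier : Continuous (𝓕 f) := VectorFourier.fourierIntegral_continuous
    Real.continuous_fourierChar (innerSL ℝ).continuous₂ hf
  refine ae_eq_of_integral_contDiff_smul_eq ((Lp.memLp _).locallyIntegrable one_le_two)
    continuous_fourier.locallyIntegrable fun g g_smooth g_compact ↦ ?_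
  have g_compact' : HasCompactSupport (Complex.ofRealCLM ∘ g) := g_compact.comp_left rfl
  have g_smooth' : ContDiff ℝ ∞ (Complex.ofRealCLM ∘ g) := by fun_prop
  simpa using
    integral_schwartzMap_smul_fourier_toLp (g_compact'.toSchwartzMap g_smooth') hf hf₂

theorem integral_inner_fourier_fourier {f g : V → F} (hf : Integrable f) (hf₂ : MemLp f 2)
    (hg : Integrable g) (hg₂ : MemLp g 2) :
    ∫ w, ⟪𝓕 f w, 𝓕 g w⟫_ℂ = ∫ v, ⟪f v, g v⟫_ℂ :=
  calc
    ∫ w, ⟪𝓕 f w, 𝓕 g w⟫_ℂ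
        = ⟪(𝓕 (hf₂.toLp f) : Lp F 2 (volume : Measure V)),
            (𝓕 (hg₂.toLp g) : Lp F 2 (volume : Measure V))⟫_ℂ := by
      rw [L2.inner_def]
      refine integral_congr_ae ?_
      filter_upwards [coeFn_fourier_toLp hf hf₂, coeFn_fourier_toLp hg hg₂] with w hfw hgw
      rw [hfw, hgw]
    _ = ⟪hf₂.toLp f, hg₂.toLp g⟫_ℂ := Lp.inner_fourier_eq _ _
    _ = ∫ v, ⟪f v, g v⟫_ℂ := by
      rw [L2.inner_def]
      refine integral_congr_ae ?_
      filter_upwards [hf₂.coeFn_toLp, hg₂.coeFn_toLp] with v hfv hgv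
      rw [hfv, hgv]

theorem fourier_mul_eq_convolution {f g : V → ℂ} (hf : Integrable f) (hf₂ : MemLp f 2)
    (hg : Integrable g) (hg₂ : MemLp g 2) :
    𝓕 (fun v ↦ f v * g v) = 𝓕 f ⋆[ContinuousLinearMap.mul ℂ ℂ] 𝓕 g := by
  ext ξ
  let u : V → ℂ := fun v ↦ Real.fourierChar ⟪v, ξ⟫_ℝ • conj (g v)
  have u_meas : AEStronglyMeasurable u :=
    (by fun_prop : Continuous fun v : V ↦ Real.fourierChar ⟪v, ξ⟫_ℝ).aestronglyMeasurable.smul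
      hg.aestronglyMeasurable.star
  have norm_u : ∀ᵐ v, ‖g v‖ = ‖u v‖ := .of_forall fun v ↦ by
    rw [Circle.norm_smul, RCLike.norm_conj]
  have conj_fourier_u (w : V) : conj (𝓕 u w) = 𝓕 g (ξ - w) := by
    simp only [u, fourier_fourierChar_smul, conj_fourier, Complex.conj_conj, neg_sub]
  calc
    𝓕 (fun v ↦ f v * g v) ξ = ∫ v, ⟪u v, f v⟫_ℂ := by
      simp only [Real.fourier_eq, u, RCLike.inner_apply, Circle.smul_def, smul_eq_mul, map_mul,
        AddChar.map_neg_eq_inv, Circle.coe_inv_eq_conj, Complex.conj_conj, mul_left_comm]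
    _ = ∫ w, ⟪𝓕 u w, 𝓕 f w⟫_ℂ :=
      (integral_inner_fourier_fourier (hg.congr' u_meas norm_u) (hg₂.congr_norm u_meas norm_u)
        hf hf₂).symm
    _ = (𝓕 f ⋆[ContinuousLinearMap.mul ℂ ℂ] 𝓕 g) ξ := by
      simp only [convolution_def, ContinuousLinearMap.mul_apply', RCLike.inner_apply,
        conj_fourier_u]

end FourierTransform

section ExponentialSemigroup

theorem memLp_two_exp_neg_mul {X : Type*} [MeasurableSpace X] {μ : Measure X} {ψ : X → ℂ}
    (hψ : ∀ t : ℝ, 0 < t → Integrable (fun x ↦ Complex.exp (-(t * ψ x))) μ) {t : ℝ} (ht : 0 < t) :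
    MemLp (fun x ↦ Complex.exp (-(t * ψ x))) 2 μ := by
  rw [memLp_two_iff_integrable_sq_norm (hψ t ht).aestronglyMeasurable]
  refine (hψ (2 * t) (by positivity)).norm.congr (.of_forall fun x ↦ ?_)
  simp only [← norm_pow, ← Complex.exp_nat_mul]
  push_cast
  ring_nf

theorem fourier_exp_neg_add_mul_eq_convolution {V : Type*} [NormedAddCommGroup V]
    [InnerProductSpace ℝ V] [FiniteDimensional ℝ V] [MeasurableSpace V] [BorelSpace V] {ψ : V → ℂ}
    (hψ : ∀ t : ℝ, 0 < t → Integrable (fun v ↦ Complex.exp (-(t * ψ v)))) {t s : ℝ} (ht : 0 < t)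
    (hs : 0 < s) :
    𝓕 (fun v ↦ Complex.exp (-((t + s : ℝ) * ψ v))) =
      𝓕 (fun v ↦ Complex.exp (-(t * ψ v))) ⋆[ContinuousLinearMap.mul ℂ ℂ]
        𝓕 (fun v ↦ Complex.exp (-(s * ψ v))) := by
  rw [← fourier_mul_eq_convolution (hψ t ht) (memLp_two_exp_neg_mul hψ ht) (hψ s hs)
    (memLp_two_exp_neg_mul hψ hs)]
  simp only [Complex.ofReal_add, add_mul, neg_add, Complex.exp_add]

end ExponentialSemigroup

theorem integrable_exp_neg_mul_norm_rpow {E : Type*} [NormedAddCommGroup E] [NormedSpace ℝ E]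
    [FiniteDimensional ℝ E] [Nontrivial E] [MeasurableSpace E] [BorelSpace E] (μ : Measure E)
    [μ.IsAddHaarMeasure] {p b : ℝ} (hp : 0 < p) (hb : 0 < b) :
    Integrable (fun x ↦ Real.exp (-b * ‖x‖ ^ p)) μ := by
  have one_le_dim : 1 ≤ Module.finrank ℝ E := Module.finrank_pos
  refine (integrable_fun_norm_addHaar μ (f := fun r ↦ Real.exp (-b * r ^ p))).2 ?_
  simpa only [← Nat.cast_pred one_le_dim, Real.rpow_natCast, smul_eq_mul] using
    integrableOn_rpow_mul_exp_neg_mul_rpow (s := ((Module.finrank ℝ E - 1 : ℕ) : ℝ))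
      (neg_one_lt_zero.trans_le (Nat.cast_nonneg _)) hp hb

theorem convolution_comp_div {𝕜 E₁ E₂ E₃ : Type*} [NontriviallyNormedField 𝕜]
    [NormedAddCommGroup E₁] [NormedSpace 𝕜 E₁] [NormedAddCommGroup E₂] [NormedSpace 𝕜 E₂]
    [NormedAddCommGroup E₃] [NormedSpace 𝕜 E₃] [NormedSpace ℝ E₃]
    (L : E₁ →L[𝕜] E₂ →L[𝕜] E₃) (f : ℝ → E₁) (g : ℝ → E₂) (c x : ℝ) :
    ((fun y ↦ f (y / c)) ⋆[L] fun y ↦ g (y / c)) x = |c| • (f ⋆[L] g) (x / c) := by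
  simp only [convolution_def, sub_div]
  exact Measure.integral_comp_div (fun w ↦ L (f w) (g (x / c - w))) c

section FellerExponent

/-- Feller's exponent `ψ(z) = |z|^a exp(−iδ(π/2) sgn z)`: the functions `exp (-t ψ)` are the
multipliers whose Fourier transforms give the Green functions `G1 a δ t`. -/
noncomputable def fellerExponent (a δ z : ℝ) : ℂ :=
  (|z| ^ a : ℝ) * Complex.exp (-(Complex.I * δ * (Real.pi / 2 : ℝ) * (Real.sign z : ℝ)))

theorem measurable_realSign : Measurable Real.sign :=
  .ite measurableSet_Iio measurable_const (.ite measurableSet_Ioi measurable_const measurable_const)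

theorem measurable_fellerExponent (a δ : ℝ) : Measurable (fellerExponent a δ) := by
  have := measurable_realSign
  unfold fellerExponent
  fun_prop

theorem re_fellerExponent {a : ℝ} (ha : a ≠ 0) (δ z : ℝ) :
    (fellerExponent a δ z).re = Real.cos (δ * (Real.pi / 2)) * |z| ^ a := by
  have re_exp (r : ℝ) :
      (Complex.exp (-(Complex.I * δ * (Real.pi / 2 : ℝ) * r))).re =
        Real.cos (δ * (Real.pi / 2) * r) := by
    simp [Complex.exp_re]
  rw [fellerExponent, Complex.re_ofReal_mul, re_exp]
  rcases lt_trichotomy z 0 with hz | rfl | hz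
  · rw [Real.sign_of_neg hz, mul_neg_one, Real.cos_neg, mul_comm]
  · simp only [abs_zero, Real.zero_rpow ha, zero_mul, mul_zero]
  · rw [Real.sign_of_pos hz, mul_one, mul_comm]

theorem integrable_exp_neg_mul_fellerExponent {a δ t : ℝ} (ha : 0 < a)
    (hδ : 0 < Real.cos (δ * (Real.pi / 2))) (ht : 0 < t) :
    Integrable fun z ↦ Complex.exp (-(t * fellerExponent a δ z)) := by
  have := measurable_fellerExponent a δ
  refine (integrable_exp_neg_mul_norm_rpow volume ha (mul_pos ht hδ)).congr' (by fun_prop)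
    (.of_forall fun z ↦ ?_)
  rw [Complex.norm_exp, Complex.neg_re, Complex.re_ofReal_mul, re_fellerExponent ha.ne',
    Real.norm_of_nonneg (Real.exp_nonneg _), Real.norm_eq_abs, neg_mul, mul_assoc]

theorem G1_eq_fourier (a δ t x : ℝ) :
    G1 a δ t x = (1 / (2 * Real.pi)) •
      𝓕 (fun z ↦ Complex.exp (-(t * fellerExponent a δ z))) (x / (2 * Real.pi)) := by
  rw [G1, Real.fourier_real_eq_integral_exp_smul]
  congr! 3 with z
  have pi_ne_zero : (Real.pi : ℂ) ≠ 0 := mod_cast Real.pi_ne_zero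
  rw [fellerExponent, smul_eq_mul, ← Complex.exp_add]
  congr 1
  push_cast
  field_simp
  ring

end FellerExponent

theorem min_two_sub_lt_one {a : ℝ} (ha : a ≠ 1) : min a (2 - a) < 1 := by
  rcases lt_or_gt_of_ne ha with h | h
  · exact min_lt_of_left_lt h
  · exact min_lt_of_right_lt (by linarith)

theorem cos_mul_pi_div_two_pos {δ : ℝ} (hδ : |δ| < 1) : 0 < Real.cos (δ * (Real.pi / 2)) := by
  obtain ⟨neg_one_lt, lt_one⟩ := abs_lt.1 hδ
  apply Real.cos_pos_of_mem_Ioo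
  constructor <;> nlinarith [Real.pi_pos]

theorem stmt6_general (a δ : ℝ) (ha : 0 < a) (hδ : 0 < Real.cos (δ * (Real.pi / 2))) (s t : ℝ)
    (hs : 0 < s) (ht : 0 < t) (x : ℝ) :
    G1 a δ (t + s) x = ∫ y : ℝ, G1 a δ t y * G1 a δ s (x - y) := by
  let Φ (r : ℝ) : ℝ → ℂ := 𝓕 fun z ↦ Complex.exp (-(r * fellerExponent a δ z))
  let c : ℝ := 2 * Real.pi
  have c_pos : 0 < c := Real.two_pi_pos
  have G1_eq (r y : ℝ) : G1 a δ r y = (1 / c) • Φ r (y / c) := G1_eq_fourier a δ r y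
  have Φ_add : Φ (t + s) = Φ t ⋆[ContinuousLinearMap.mul ℂ ℂ] Φ s :=
    fourier_exp_neg_add_mul_eq_convolution
      (fun r hr ↦ integrable_exp_neg_mul_fellerExponent ha hδ hr) ht hs
  calc
    G1 a δ (t + s) x
        = (1 / c * (1 / c)) • |c| • (Φ t ⋆[ContinuousLinearMap.mul ℂ ℂ] Φ s) (x / c) := by
      rw [G1_eq, Φ_add, smul_smul, abs_of_pos c_pos, mul_assoc,
        one_div_mul_cancel c_pos.ne', mul_one]
    _ = (1 / c * (1 / c)) • ∫ y, Φ t (y / c) * Φ s ((x - y) / c) := by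
      rw [← convolution_comp_div]; rfl
    _ = ∫ y, G1 a δ t y * G1 a δ s (x - y) := by
      simp only [G1_eq, smul_mul_smul_comm, integral_smul]

theorem stmt6 (a δ : ℝ) (ha : 0 < a ∧ a ≤ 2 ∧ a ≠ 1)
    (hδ : |δ| ≤ min a (2 - a)) (s t : ℝ) (hs : 0 < s) (ht : 0 < t) (x : ℝ) :
    G1 a δ (t + s) x = ∫ y : ℝ, G1 a δ t y * G1 a δ s (x - y) :=
  stmt6_general a δ ha.1 (cos_mul_pi_div_two_pos (hδ.trans_lt (min_two_sub_lt_one ha.2.2)))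
    s t hs ht x
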